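/- Let A ⊆ ℕ be infinite and η : ℕ → ℕ take values in {0,1}, with both { n ∈ A : η(n) = 0 } and { n ∈ A : η(n) = 1 } infinite. Let g : 𝒩 → (ℕ → {0,1}) be any function. Suppose that for every i ∈ ℕ and every p ∈ ℍ there exist m ∈ {0,1} and p' ≤^A p such that p' ensures (x ↦ g(x)(i)) = m. Then there exists x ∈ 𝒩 such that the set I = { i ∈ ℕ : x(i) ∈ A } is infinite and, listing I in increasing order as i₀ < i₁ < ⋯, g(x)(k) = η(x(i_k)) for every k ∈ ℕ (i.e., f_a(x) = g(x) for the encoding function determined by A and η). -/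

import Mathlib

/-!
The sequence `x` is built in stages by playing all the games simultaneously.  At stage `k` a
`≤^A`-extension of the current condition is taken that ensures `g(x)(k) = m` for some
`m ∈ {0, 1}`; then a single element `a ∈ A` with `η a = m` is appended to the stem; finally Player
II's winning strategies for the games `0, …, k` opened so far are consulted one after the other,
each answer serving as (part of) Player I's next move in the other games.  Player II's moves never
add entries from `A`, so the `k`-th entry of `x` in `A` is exactly the one appended at stage `k`,
and since every game is won by Player II, `g x k = m = η a`.

A game in progress is handled by replacing the strategy with its tail (`Pos.next`).  The two
facts about this are that a move by the tail strategy is legal and leaves a winning position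
(`Pos.winning_next`), and that an infinite chain of such moves is a play of the original game
(`Pos.playFor`).  One round of all open games is `exists_round`, and one stage of the construction
is `exists_stage`.
-/

/-- `t₂ ⊒_h t₁`: `t₂` is an end-extension of `t₁` to the right of `h`, i.e. `t₂(n) ≥ h(t₂ ↾ n)`
for every `n` with `|t₁| ≤ n < |t₂|`. -/
def ExtRight (h : List ℕ → ℕ) (t₁ t₂ : List ℕ) : Prop :=
  t₁ <+: t₂ ∧ ∀ (n : ℕ) (hn : n < t₂.length), t₁.length ≤ n → h (t₂.take n) ≤ t₂.get ⟨n, hn⟩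

/-- `t₂ ⊒^A_h t₁`: `t₂ ⊒_h t₁` and moreover every new entry of `t₂` avoids `A`, i.e.
`t₂(n) ∉ A` for every `n` with `|t₁| ≤ n < |t₂|`. -/
def ExtRightAvoid (A : Set ℕ) (h : List ℕ → ℕ) (t₁ t₂ : List ℕ) : Prop :=
  ExtRight h t₁ t₂ ∧ ∀ (n : ℕ) (hn : n < t₂.length), t₁.length ≤ n → t₂.get ⟨n, hn⟩ ∉ A

/-- A condition of the Hechler-type poset `ℍ`: a pair `(t, h)` with `t ∈ List ℕ` a stem and
`h : List ℕ → ℕ` a side condition. -/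
abbrev Hcond : Type := List ℕ × (List ℕ → ℕ)

/-- The order on `ℍ`: `(t₂, h₂) ≤ (t₁, h₁)` iff `t₂ ⊒_{h₁} t₁` and `h₂ ≥ h₁` pointwise. -/
def Hle (p q : Hcond) : Prop :=
  ExtRight q.2 q.1 p.1 ∧ ∀ s : List ℕ, q.2 s ≤ p.2 s

/-- `(t₂, h₂) ≤^A (t₁, h₁)` iff `t₂ ⊒^A_{h₁} t₁` and `h₂ ≥ h₁` pointwise. -/
def HleAvoid (A : Set ℕ) (p q : Hcond) : Prop :=
  ExtRightAvoid A q.2 q.1 p.1 ∧ ∀ s : List ℕ, q.2 s ≤ p.2 s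

/-- `x : ℕ → ℕ` extends the finite sequence `t : List ℕ`. -/
def extendsList (t : List ℕ) (x : ℕ → ℕ) : Prop :=
  ∀ (i : ℕ) (h : i < t.length), x i = t.get ⟨i, h⟩

/-- `q : ℕ → Hcond` is a legal play of the game (for the poset `ℍ` and set `A`) starting from
`p₀` in which Player II follows the strategy `σ`: Player I moves first, playing `q 0, q 2, …`
(each a `≤`-extension of the previous condition), and Player II plays
`q 1, q 3, …`, where `q (2k+1)` is produced by applying `σ` to the history
`⟨q 0, …, q (2k)⟩`. -/
structure PlayFor (A : Set ℕ) (p₀ : Hcond) (σ : List Hcond → Hcond) (q : ℕ → Hcond) : Prop where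
  first : Hle (q 0) p₀
  moveI : ∀ k : ℕ, Hle (q (2 * k + 2)) (q (2 * k + 1))
  moveII : ∀ k : ℕ, q (2 * k + 1) = σ (List.ofFn fun i : Fin (2 * k + 1) => q i)

/-- `σ` is a winning strategy for Player II in the game `𝒢(j, m)` starting from `p₀`: in every
legal play following `σ`, all of Player II's moves are legal `≤^A`-extensions, and whenever the
stem lengths are unbounded, the unique `x ∈ 𝒩` extending all stems satisfies `j x = m`. -/
def WinningII (A : Set ℕ) (j : (ℕ → ℕ) → ℕ) (m : ℕ) (p₀ : Hcond)
    (σ : List Hcond → Hcond) : Prop :=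
  ∀ q : ℕ → Hcond, PlayFor A p₀ σ q →
    (∀ k : ℕ, HleAvoid A (q (2 * k + 1)) (q (2 * k))) ∧
    ((∀ N : ℕ, ∃ k : ℕ, N ≤ (q k).1.length) →
      ∀ x : ℕ → ℕ, (∀ k : ℕ, extendsList (q k).1 x) → j x = m)

/-- The condition `p` ensures `j(x) = m` iff Player II has a winning strategy in the game
`𝒢(j, m)` starting from `p`. -/
def Ensures (A : Set ℕ) (j : (ℕ → ℕ) → ℕ) (m : ℕ) (p : Hcond) : Prop :=
  ∃ σ : List Hcond → Hcond, WinningII A j m p σ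


/-! ### The order on conditions -/

theorem ExtRight.trans {h₁ h₂ : List ℕ → ℕ} {t₁ t₂ t₃ : List ℕ} (hh : ∀ s, h₁ s ≤ h₂ s)
    (h12 : ExtRight h₁ t₁ t₂) (h23 : ExtRight h₂ t₂ t₃) : ExtRight h₁ t₁ t₃ := by
  refine ⟨h12.1.trans h23.1, fun n hn h1n => ?_⟩
  by_cases h : n < t₂.length
  · obtain ⟨r, rfl⟩ := h23.1
    have := h12.2 n h h1n
    simpa [List.take_append_of_le_length h.le, List.getElem_append_left h] using this
  · exact (hh _).trans (h23.2 n hn (not_lt.1 h))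

theorem Hle.refl (p : Hcond) : Hle p p :=
  ⟨⟨List.prefix_rfl, fun _ hn h => absurd hn (not_lt.2 h)⟩, fun _ => le_rfl⟩

theorem Hle.trans {p q r : Hcond} (hpq : Hle p q) (hqr : Hle q r) : Hle p r :=
  ⟨hqr.1.trans hqr.2 hpq.1, fun s => (hqr.2 s).trans (hpq.2 s)⟩

theorem HleAvoid.hle {A : Set ℕ} {p q : Hcond} (h : HleAvoid A p q) : Hle p q := ⟨h.1.1, h.2⟩

theorem HleAvoid.refl (A : Set ℕ) (p : Hcond) : HleAvoid A p p :=
  ⟨⟨(Hle.refl p).1, fun _ hn h => absurd hn (not_lt.2 h)⟩, fun _ => le_rfl⟩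

theorem HleAvoid.trans {A : Set ℕ} {p q r : Hcond} (hpq : HleAvoid A p q)
    (hqr : HleAvoid A q r) : HleAvoid A p r := by
  refine ⟨⟨(hpq.hle.trans hqr.hle).1, fun n hn h1n => ?_⟩, (hpq.hle.trans hqr.hle).2⟩
  by_cases h : n < q.1.length
  · obtain ⟨s, hs⟩ := hpq.1.1.1
    have := hqr.1.2 n h h1n
    simpa [← hs, List.getElem_append_left h] using this
  · exact hpq.1.2 n hn (not_lt.1 h)

open Classical in
/-- The number of entries of the finite sequence `t` that lie in `A`. -/
noncomputable def cntA (A : Set ℕ) (t : List ℕ) : ℕ := t.countP (fun a => decide (a ∈ A))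

theorem HleAvoid.cntA_eq {A : Set ℕ} {p q : Hcond} (h : HleAvoid A p q) :
    cntA A p.1 = cntA A q.1 := by
  classical
  obtain ⟨s, hs⟩ := h.1.1.1
  have key : ∀ a ∈ s, a ∉ A := by
    intro a ha
    obtain ⟨i, hi, rfl⟩ := List.getElem_of_mem ha
    have h2 := h.1.2 (q.1.length + i) (by rw [← hs, List.length_append]; omega) (by omega)
    simpa [← hs] using h2
  have hz : cntA A s = 0 := by
    simpa [cntA, List.countP_eq_zero] using key
  rw [← hs]
  unfold cntA at hz ⊢
  rw [List.countP_append, hz, add_zero]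

open Classical in
theorem cntA_eq_count (A : Set ℕ) (x : ℕ → ℕ) (t : List ℕ) (h : extendsList t x) :
    cntA A t = Nat.count (fun i => x i ∈ A) t.length := by
  induction t using List.reverseRecOn with
  | nil => simp [cntA]
  | append_singleton t a ih =>
    have ht : extendsList t x := by
      intro i hi
      have := h i (by simp; omega)
      simpa [List.getElem_append_left hi] using this
    have ha : x t.length = a := by
      have := h t.length (by simp)
      simpa using this
    have ih' := ih ht
    unfold cntA at ih' ⊢
    rw [List.countP_append, ih', List.length_append, List.length_singleton, Nat.count_succ, ha]
    simp [List.countP_cons]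

theorem extendsList.of_prefix {t s : List ℕ} {x : ℕ → ℕ} (h : extendsList s x) (hts : t <+: s) :
    extendsList t x := by
  obtain ⟨r, rfl⟩ := hts
  intro i hi
  have := h i (by simp; omega)
  simpa [List.getElem_append_left hi] using this

/-! ### Games in progress -/

/-- A position with Player I to move in a game `𝒢(j, m)`: the target value `m`, the most recent
condition, and Player II's strategy for the remainder of the game. -/
structure Pos where
  /-- The value that Player II aims at. -/
  m : ℕ
  /-- The most recently played condition. -/
  cur : Hcond
  /-- Player II's strategy from here on; its argument is the history from this position on. -/
  strat : List Hcond → Hcond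

/-- The position after Player I plays `c` and Player II answers by the strategy. -/
def Pos.next (P : Pos) (c : Hcond) : Pos where
  m := P.m
  cur := P.strat [c]
  strat := fun L => P.strat (c :: P.strat [c] :: L)

/-- The sequence `c 0, d 0, c 1, d 1, …`. -/
def interleave (c d : ℕ → Hcond) (n : ℕ) : Hcond := if n % 2 = 0 then c (n / 2) else d (n / 2)

theorem interleave_even (c d : ℕ → Hcond) (n : ℕ) : interleave c d (2 * n) = c n := by
  simp [interleave]

theorem interleave_odd (c d : ℕ → Hcond) (n : ℕ) : interleave c d (2 * n + 1) = d n := by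
  have h1 : (2 * n + 1) % 2 = 1 := by omega
  have h2 : (2 * n + 1) / 2 = n := by omega
  simp [interleave, h1, h2]

/-- A chain of positions, each obtained from the previous one by a legal move of Player I and the
strategic answer, is a play of the game starting at the first position. -/
theorem Pos.playFor (A : Set ℕ) (P : ℕ → Pos) (c : ℕ → Hcond)
    (hc : ∀ n, Hle (c n) (P n).cur) (hP : ∀ n, P (n + 1) = (P n).next (c n)) :
    PlayFor A (P 0).cur (P 0).strat (interleave c (fun n => (P (n + 1)).cur)) := by
  set q := interleave c (fun n => (P (n + 1)).cur) with hq
  have he : ∀ n, q (2 * n) = c n := interleave_even _ _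
  have ho : ∀ n, q (2 * n + 1) = (P (n + 1)).cur := interleave_odd _ _
  have hs : ∀ n L, (P n).strat L
      = (P 0).strat ((List.ofFn fun i : Fin (2 * n) => q i) ++ L) := by
    intro n
    induction n with
    | zero => simp
    | succ n ih =>
      intro L
      have h2 : (List.ofFn fun i : Fin (2 * (n + 1)) => q i)
          = (List.ofFn fun i : Fin (2 * n) => q i) ++ [q (2 * n), q (2 * n + 1)] := by
        have : (List.ofFn fun i : Fin (2 * (n + 1)) => q i)
          = (List.ofFn fun i : Fin (2 * n + 1 + 1) => q i) := rfl
        rw [this, List.ofFn_succ_last, List.ofFn_succ_last]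
        simp
      rw [h2, he, ho, hP n]
      simp only [Pos.next]
      rw [ih]
      simp
  refine ⟨?_, fun k => ?_, fun k => ?_⟩
  · have := he 0
    simp only [mul_zero] at this
    rw [this]
    exact hc 0
  · have h1 := he (k + 1)
    rw [ho k, show 2 * k + 2 = 2 * (k + 1) by ring, h1]
    exact hc (k + 1)
  · rw [ho, hP k, List.ofFn_succ_last]
    simp only [Pos.next]
    rw [hs, ← he k]
    simp

/-- Player II's stored strategy is winning in the game for `j` from this position. -/
def Pos.Winning (A : Set ℕ) (j : (ℕ → ℕ) → ℕ) (P : Pos) : Prop :=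
  WinningII A j P.m P.cur P.strat

/-- Legality of the strategy is only promised along infinite plays, so the move `c` is completed to
one in which Player I passes forever after. -/
theorem Pos.next_legal {A : Set ℕ} {j : (ℕ → ℕ) → ℕ} {P : Pos} (hP : P.Winning A j) {c : Hcond}
    (hc : Hle c P.cur) : HleAvoid A (P.next c).cur c := by
  let Q : ℕ → Pos × Hcond := fun n =>
    Nat.rec (P, c) (fun _ s => (s.1.next s.2, (s.1.next s.2).cur)) n
  have hQ : ∀ n, Q (n + 1) = ((Q n).1.next (Q n).2, ((Q n).1.next (Q n).2).cur) := fun n => rfl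
  have hplay := Pos.playFor A (fun n => (Q n).1) (fun n => (Q n).2)
    (by
      rintro (_ | n)
      · exact hc
      · rw [hQ]; exact Hle.refl _)
    (fun n => by rw [hQ])
  have := (hP _ hplay).1 0
  rw [interleave_even, interleave_odd] at this
  exact this

theorem Pos.winning_next {A : Set ℕ} {j : (ℕ → ℕ) → ℕ} {P : Pos} (hP : P.Winning A j) {c : Hcond}
    (hc : Hle c P.cur) : (P.next c).Winning A j := by
  intro q hq
  -- The play of the full game that begins with the last two moves.
  let r : ℕ → Hcond := fun n =>
    match n with
    | 0 => c
    | 1 => P.strat [c]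
    | n + 2 => q n
  have hr : PlayFor A P.cur P.strat r := by
    refine ⟨hc, fun k => ?_, fun k => ?_⟩
    · rcases k with _ | k
      · exact hq.first
      · exact hq.moveI k
    · rcases k with _ | k
      · simp [r]
      · have h2 : (List.ofFn fun i : Fin (2 * (k + 1) + 1) => r i)
            = c :: P.strat [c] :: List.ofFn fun i : Fin (2 * k + 1) => q i := by
          have : (List.ofFn fun i : Fin (2 * (k + 1) + 1) => r i)
            = (List.ofFn fun i : Fin (2 * k + 1 + 1 + 1) => r i) := rfl
          rw [this, List.ofFn_succ, List.ofFn_succ]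
          rfl
        rw [h2]
        exact hq.moveII k
  obtain ⟨h1, h2⟩ := hP r hr
  refine ⟨fun k => h1 (k + 1), fun hN x hx => h2 (fun N => ?_) x ?_⟩
  · obtain ⟨k, hk⟩ := hN N
    exact ⟨k + 2, hk⟩
  · have h0 : Hle (q 0) (P.next c).cur := hq.first
    have hl : HleAvoid A (P.next c).cur c := Pos.next_legal hP hc
    rintro (_ | _ | k)
    · exact (hx 0).of_prefix (h0.trans hl.hle).1.1
    · exact (hx 0).of_prefix h0.1.1
    · exact hx k

/-! ### The construction -/

/-- One round: all of the games `0, …, K - 1` are advanced by one pair of moves, at the price of a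
single `≤^A`-extension of the common current condition. -/
theorem exists_round (A : Set ℕ) (j : ℕ → (ℕ → ℕ) → ℕ) (K : ℕ) (p : Hcond) (P : ℕ → Pos)
    (h : ∀ i < K, (P i).Winning A (j i) ∧ Hle p (P i).cur) :
    ∃ (p' : Hcond) (c : ℕ → Hcond), HleAvoid A p' p ∧
      ∀ i < K, Hle (c i) p ∧ Hle (c i) (P i).cur ∧ Hle p' ((P i).next (c i)).cur := by
  induction K with
  | zero => exact ⟨p, fun _ => p, HleAvoid.refl A p, fun i hi => absurd hi (Nat.not_lt_zero i)⟩
  | succ K ih =>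
    obtain ⟨p', c, hp', hc⟩ := ih (fun i hi => h i (by omega))
    obtain ⟨hW, hl⟩ := h K (by omega)
    have hlt : Hle p' (P K).cur := hp'.hle.trans hl
    have hleg := Pos.next_legal hW hlt
    refine ⟨((P K).next p').cur, Function.update c K p', hleg.trans hp', fun i hi => ?_⟩
    by_cases hiK : i = K
    · subst hiK
      simp only [Function.update_self]
      exact ⟨hp'.hle, hlt, Hle.refl _⟩
    · obtain ⟨a, b, d⟩ := hc i (by omega)
      simp only [Function.update_of_ne hiK]
      exact ⟨a, b, hleg.hle.trans d⟩

/-- The invariant at the start of stage `k`: the stem of the current condition `s.1` has exactly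
`k` entries in `A`; the games `0, …, k - 1` are in winning positions `s.2 i`, compatible with
`s.1`; and `η` of the `i`-th entry in `A` is the target value of game `i`. -/
def StageInv (A : Set ℕ) (η : ℕ → ℕ) (j : ℕ → (ℕ → ℕ) → ℕ) (k : ℕ) (s : Hcond × (ℕ → Pos)) :
    Prop :=
  cntA A s.1.1 = k ∧ ∀ i < k, (s.2 i).Winning A (j i) ∧ Hle s.1 (s.2 i).cur ∧
    ∃ t a, t ++ [a] <+: s.1.1 ∧ cntA A t = i ∧ a ∈ A ∧ η a = (s.2 i).m

/-- Stage `k` leads from `s` to `s'`: each of the games `0, …, k - 1` is advanced by one pair of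
moves, Player I's move `c` extending the current condition `s.1`. -/
def StageStep (k : ℕ) (s s' : Hcond × (ℕ → Pos)) : Prop :=
  s.1.1 <+: s'.1.1 ∧ ∀ i < k, ∃ c : Hcond, Hle c s.1 ∧ Hle c (s.2 i).cur ∧
    s'.2 i = (s.2 i).next c

theorem exists_stage (A : Set ℕ) (η : ℕ → ℕ)
    (h0 : { n ∈ A | η n = 0 }.Infinite) (h1 : { n ∈ A | η n = 1 }.Infinite)
    (j : ℕ → (ℕ → ℕ) → ℕ)
    (hyp : ∀ (i : ℕ) (p : Hcond), ∃ m ≤ 1, ∃ p' : Hcond,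
      HleAvoid A p' p ∧ Ensures A (j i) m p') (k : ℕ) (s : Hcond × (ℕ → Pos))
    (hs : StageInv A η j k s) : ∃ s', StageInv A η j (k + 1) s' ∧ StageStep k s s' := by
  classical
  obtain ⟨p, P⟩ := s
  obtain ⟨hcnt, hgames⟩ := hs
  simp only at hcnt hgames
  obtain ⟨m, hm, p', hp', σ, hσ⟩ := hyp k p
  have hinf : { n ∈ A | η n = m }.Infinite := by
    interval_cases m
    · exact h0
    · exact h1
  obtain ⟨a, ⟨haA, haη⟩, hage⟩ := hinf.exists_gt (p'.2 p'.1)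
  let r : Hcond := (p'.1 ++ [a], p'.2)
  have hr : Hle r p' := by
    refine ⟨⟨List.prefix_append _ _, fun n hn hn' => ?_⟩, fun _ => le_rfl⟩
    have hn2 : n = p'.1.length := by
      simp only [r, List.length_append, List.length_singleton] at hn
      omega
    subst hn2
    simpa [r] using hage.le
  let P₁ : ℕ → Pos := Function.update P k ⟨m, p', σ⟩
  have hP₁k : P₁ k = ⟨m, p', σ⟩ := Function.update_self ..
  have hP₁ : ∀ i < k, P₁ i = P i := fun i hi => Function.update_of_ne hi.ne _ _
  have hready : ∀ i < k + 1, (P₁ i).Winning A (j i) ∧ Hle r (P₁ i).cur := by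
    intro i hi
    rcases Nat.lt_succ_iff_lt_or_eq.1 hi with hi | rfl
    · rw [hP₁ i hi]
      exact ⟨(hgames i hi).1, (hr.trans hp'.hle).trans (hgames i hi).2.1⟩
    · rw [hP₁k]
      exact ⟨hσ, hr⟩
  obtain ⟨p'', c, hp'', hc⟩ := exists_round A j (k + 1) r P₁ hready
  refine ⟨(p'', fun i => (P₁ i).next (c i)), ⟨?_, fun i hi => ?_⟩, ?_, fun i hi => ?_⟩
  · have e1 := hp''.cntA_eq
    have e2 := hp'.cntA_eq
    have e3 : cntA A r.1 = cntA A p'.1 + 1 := by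
      simp [cntA, r, List.countP_append, haA]
    simp only
    omega
  · refine ⟨Pos.winning_next (hready i hi).1 (hc i hi).2.1, (hc i hi).2.2, ?_⟩
    rcases Nat.lt_succ_iff_lt_or_eq.1 hi with hi' | rfl
    · obtain ⟨t, b, ht, htc, hb, hbm⟩ := (hgames i hi').2.2
      refine ⟨t, b, ht.trans ((hp''.hle.trans hr).trans hp'.hle).1.1, htc, hb, ?_⟩
      simpa [Pos.next, hP₁ i hi'] using hbm
    · refine ⟨p'.1, a, hp''.hle.1.1, hp'.cntA_eq.trans hcnt, haA, ?_⟩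
      simpa [Pos.next, hP₁k] using haη
  · exact ((hp''.hle.trans hr).trans hp'.hle).1.1
  · refine ⟨c i, (hc i (by omega)).1.trans (hr.trans hp'.hle), ?_, ?_⟩
    · have := (hc i (by omega)).2.1
      rwa [hP₁ i hi] at this
    · simp only [hP₁ i hi]

/-- Let `A ⊆ ℕ` be infinite and `η : ℕ → ℕ` take values in `{0, 1}`, with both
`{n ∈ A | η n = 0}` and `{n ∈ A | η n = 1}` infinite.  If for every `i` and every `p ∈ ℍ`
there are `m ∈ {0, 1}` and `p' ≤^A p` such that `p'` ensures `g(x)(i) = m`, then there is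
`x ∈ 𝒩` whose set `I = {i | x i ∈ A}` of `A`-positions is infinite and, listing `I` in
increasing order as `i₀ < i₁ < ⋯`, satisfies `g x k = η (x i_k)` for all `k` (i.e.
`f_a(x) = g(x)` for the encoding function determined by `A` and `η`). -/
theorem stmt17 (A : Set ℕ) (hA : A.Infinite)
    (η : ℕ → ℕ) (hη : ∀ n : ℕ, η n ≤ 1)
    (h0 : { n ∈ A | η n = 0 }.Infinite) (h1 : { n ∈ A | η n = 1 }.Infinite)
    (g : (ℕ → ℕ) → ℕ → ℕ) (hg : ∀ (x : ℕ → ℕ) (i : ℕ), g x i ≤ 1)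
    (hyp : ∀ (i : ℕ) (p : Hcond), ∃ m ≤ 1, ∃ p' : Hcond,
      HleAvoid A p' p ∧ Ensures A (fun x => g x i) m p') :
    ∃ x : ℕ → ℕ, { i : ℕ | x i ∈ A }.Infinite ∧
      ∀ k : ℕ, g x k = η (x (Nat.nth (fun i => x i ∈ A) k)) := by
  classical
  let j : ℕ → (ℕ → ℕ) → ℕ := fun i x => g x i
  -- The initial condition is trivial, and the initial positions are dummies.
  let s₀ : Hcond × (ℕ → Pos) :=
    (([], fun _ => 0), fun _ => ⟨0, ([], fun _ => 0), fun _ => ([], fun _ => 0)⟩)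
  have hstart : StageInv A η j 0 s₀ :=
    ⟨by simp [cntA, s₀], fun i hi => absurd hi (Nat.not_lt_zero i)⟩
  choose! nxt hnxt hstep using exists_stage A η h0 h1 j hyp
  let s : ℕ → Hcond × (ℕ → Pos) := fun n =>
    Nat.rec s₀ (fun k s => nxt k s) n
  have hinv : ∀ n, StageInv A η j n (s n) := by
    intro n
    induction n with
    | zero => exact hstart
    | succ n ih => exact hnxt n _ ih
  have hst : ∀ n, StageStep n (s n) (s (n + 1)) := fun n => hstep n _ (hinv n)
  have hmono : ∀ n l, n ≤ l → (s n).1.1 <+: (s l).1.1 := by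
    intro n l hl
    induction l, hl using Nat.le_induction with
    | base => exact List.prefix_rfl
    | succ l _ ih => exact ih.trans (hst l).1
  have hlen : ∀ n, n ≤ (s n).1.1.length := by
    intro n
    have h2 := (hinv n).1
    unfold cntA at h2
    exact h2.symm.le.trans List.countP_le_length
  let x : ℕ → ℕ := fun i => (s (i + 1)).1.1[i]'(hlen (i + 1))
  have hx : ∀ n, extendsList (s n).1.1 x := by
    intro n i hi
    rcases le_total n (i + 1) with h | h
    · exact ((hmono _ _ h).getElem hi).symm
    · exact (hmono _ _ h).getElem (hlen (i + 1))
  -- Every game is won by Player II along `x`.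
  have hwin : ∀ i, g x i = ((s (i + 1)).2 i).m := by
    intro i
    have hmv : ∀ n, ∃ c : Hcond, Hle c (s (i + 1 + n)).1 ∧ Hle c ((s (i + 1 + n)).2 i).cur ∧
        (s (i + 1 + (n + 1))).2 i = ((s (i + 1 + n)).2 i).next c :=
      fun n => (hst (i + 1 + n)).2 i (by omega)
    choose c hc1 hc2 hc3 using hmv
    have hplay := Pos.playFor A (fun n => (s (i + 1 + n)).2 i) c hc2 hc3
    have hW : ((s (i + 1)).2 i).Winning A (j i) := ((hinv (i + 1)).2 i (by omega)).1
    have hcur : ∀ n, extendsList ((s (i + 1 + n)).2 i).cur.1 x := fun n =>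
      (hx (i + 1 + n)).of_prefix ((hinv (i + 1 + n)).2 i (by omega)).2.1.1.1
    refine (hW _ hplay).2 (fun N => ⟨2 * N, ?_⟩) x (fun k => ?_)
    · rw [interleave_even]
      have h2 := (hc1 N).1.1.length_le
      have h3 := hlen (i + 1 + N)
      omega
    · obtain ⟨n, rfl | rfl⟩ := Nat.even_or_odd' k
      · rw [interleave_even]
        have hle : HleAvoid A (((s (i + 1 + n)).2 i).next (c n)).cur (c n) :=
          Pos.next_legal ((hinv (i + 1 + n)).2 i (by omega)).1 (hc2 n)
        rw [← hc3 n] at hle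
        exact (hcur (n + 1)).of_prefix hle.hle.1.1
      · rw [interleave_odd]
        exact hcur (n + 1)
  have hpos : ∀ i, ∃ n, x n ∈ A ∧ Nat.count (fun i => x i ∈ A) n = i ∧ η (x n) = g x i := by
    intro i
    obtain ⟨t, a, ht, hti, haA, ham⟩ := ((hinv (i + 1)).2 i (by omega)).2.2
    have hext := (hx (i + 1)).of_prefix ht
    have hxa : x t.length = a := by
      have := hext t.length (by simp)
      simpa using this
    refine ⟨t.length, hxa ▸ haA, ?_, ?_⟩
    · rw [← cntA_eq_count A x t (hext.of_prefix (List.prefix_append _ _)), hti]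
    · rw [hxa, ham, hwin]
  choose pos hposA hposc hposη using hpos
  refine ⟨x, Set.infinite_of_injective_forall_mem (f := pos) ?_ hposA, fun k => ?_⟩
  · intro a b hab
    rw [← hposc a, ← hposc b, hab]
  · have hnth : Nat.nth (fun i => x i ∈ A) k = pos k := by
      have := Nat.nth_count (p := fun i => x i ∈ A) (hposA k)
      rwa [hposc k] at this
    rw [hnth, hposη]
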